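/- Let n ≥ 2. For s ∈ 𝔖_n define v_s ∈ ℝ^{n−1} by (v_s)_i = s(i) − i for i = 1,…,n−1, and for y ∈ ℝ^{n−1} write ŷ = (y_1,…,y_{n−1},0) ∈ ℝ^n. Then for every s ∈ 𝔖_n, the set {y ∈ ℝ^{n−1} : ⟨y, v_σ⟩ ≥ ⟨y, v_{s^{-1}}⟩ for all σ ∈ 𝔖_n} equals {y ∈ ℝ^{n−1} : ŷ_{s(1)} ≥ ŷ_{s(2)} ≥ ⋯ ≥ ŷ_{s(n)}}. In particular, for s the identity, {y : ⟨y, v_σ⟩ ≥ 0 for all σ} = {y : y_1 ≥ y_2 ≥ ⋯ ≥ y_{n−1} ≥ 0}. -/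

import Mathlib

/-!
Since the last entry of `ŷ` vanishes, `⟨y, v_σ⟩` equals `∑ i, ŷ i * σ i` up to a constant
independent of `σ` (`sum_mul_vVec`), so the normal cone at `v_{s⁻¹}` consists of the `y` for which
`s⁻¹` minimizes `σ ↦ ∑ i, ŷ i * σ i`. After reindexing along `s`, the rearrangement inequality
says that this holds when `ŷ ∘ s` is weakly decreasing; conversely, comparing `s⁻¹` with its
composition with the transposition of two values `a < b` forces `ŷ (s b) ≤ ŷ (s a)`
(`forall_sum_mul_inv_le_iff`). The second claim is the case `s = 1`, where `v_1 = 0`, and there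
the decreasing condition on `ŷ` is rewritten in terms of `y` (`antitone_extZero_iff`).
-/

/-- The vertex `v_s ∈ ℝ^{n−1}` of the permutahedron, with entries
`(v_s)_i = s(i) − i` for `i = 1,…,n−1` (zero-indexed). -/
noncomputable def vVec (n : ℕ) (s : Equiv.Perm (Fin n)) : Fin (n - 1) → ℝ :=
  fun k => (((s (Fin.castLE (Nat.sub_le n 1) k) : Fin n) : ℕ) : ℝ) - ((k : ℕ) : ℝ)

/-- The extension `ŷ = (y_1,…,y_{n−1},0) ∈ ℝ^n` of `y ∈ ℝ^{n−1}` by a final zero. -/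
def extZero (n : ℕ) (y : Fin (n - 1) → ℝ) : Fin n → ℝ :=
  fun i => if h : (i : ℕ) < n - 1 then y ⟨i, h⟩ else 0

/-- The pairing with `v_σ` differs from the pairing of `ŷ` with the full vector `(σ(1),…,σ(n))`
by a constant independent of `σ`, because the last entry of `ŷ` is zero. -/
theorem sum_mul_vVec (n : ℕ) (hn : 2 ≤ n) (y : Fin (n - 1) → ℝ) (σ : Equiv.Perm (Fin n)) :
    ∑ k, y k * vVec n σ k =
      ∑ i, extZero n y i * ((σ i : ℕ) : ℝ) - ∑ i, extZero n y i * ((i : ℕ) : ℝ) := by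
  obtain ⟨m, rfl⟩ : ∃ m, n = m + 1 := ⟨n - 1, by omega⟩
  rw [← Finset.sum_sub_distrib, Fin.sum_univ_castSucc]
  have hlast : extZero (m + 1) y (Fin.last m) = 0 := by simp [extZero]
  rw [hlast]
  simp only [zero_mul, sub_zero, add_zero]
  refine Finset.sum_congr rfl fun k _ => ?_
  have hk : extZero (m + 1) y k.castSucc = y k := by simp [extZero]
  rw [hk, ← mul_sub]
  rfl

/-- The rearrangement inequality together with its converse: `s⁻¹` minimizes the pairing
`∑ i, f i * σ i` exactly when `f ∘ s` is weakly decreasing. -/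
theorem forall_sum_mul_inv_le_iff {n : ℕ} (f : Fin n → ℝ) (s : Equiv.Perm (Fin n)) :
    (∀ σ : Equiv.Perm (Fin n),
        ∑ i, f i * ((s⁻¹ i : Fin n) : ℕ) ≤ ∑ i, f i * (((σ i : Fin n) : ℕ) : ℝ)) ↔
      ∀ a b : Fin n, a ≤ b → f (s b) ≤ f (s a) := by
  have key (σ : Equiv.Perm (Fin n)) : ∑ i, f i * (((σ i : Fin n) : ℕ) : ℝ) =
      ∑ j, f (s j) * ((((σ * s) j : Fin n) : ℕ) : ℝ) :=
    (Equiv.sum_comp s fun i => f i * (((σ i : Fin n) : ℕ) : ℝ)).symm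
  constructor
  · intro h a b hab
    rcases hab.eq_or_lt with rfl | hlt
    · exact le_rfl
    have h1 := h (Equiv.swap a b * s⁻¹)
    rw [key, key, inv_mul_cancel, inv_mul_cancel_right, ← sub_nonneg,
      ← Finset.sum_sub_distrib, Fintype.sum_eq_add a b hlt.ne] at h1
    · simp only [Equiv.swap_apply_left, Equiv.swap_apply_right, Equiv.Perm.one_apply] at h1
      have hc : ((a : ℕ) : ℝ) < ((b : ℕ) : ℝ) := by exact_mod_cast hlt
      -- `h1` now says that `(f (s a) - f (s b)) * (b - a)` is nonnegative.
      nlinarith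
    · rintro x ⟨hxa, hxb⟩
      simp [Equiv.swap_apply_of_ne_of_ne hxa hxb]
  · intro h σ
    rw [key, key, inv_mul_cancel]
    have hanti : Antivary (fun j => f (s j)) (fun j : Fin n => ((j : ℕ) : ℝ)) := by
      intro i j hij
      have hij' : ((i : ℕ) : ℝ) ≤ ((j : ℕ) : ℝ) := hij.le
      exact h i j (by exact_mod_cast hij')
    exact hanti.sum_mul_le_sum_mul_comp_perm (σ := σ * s)

theorem antitone_extZero_iff (n : ℕ) (h2 : n - 2 < n - 1) (y : Fin (n - 1) → ℝ) :
    (∀ a b : Fin n, a ≤ b → extZero n y b ≤ extZero n y a) ↔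
      (∀ a b : Fin (n - 1), a ≤ b → y b ≤ y a) ∧ 0 ≤ y ⟨n - 2, h2⟩ := by
  constructor
  · intro h
    refine ⟨fun a b hab => ?_, ?_⟩
    · have := h ⟨a, by omega⟩ ⟨b, by omega⟩ hab
      simpa [extZero] using this
    · have := h ⟨n - 2, by omega⟩ ⟨n - 1, by omega⟩ (by simp only [Fin.mk_le_mk]; omega)
      simpa [extZero, h2] using this
  · rintro ⟨h, h0⟩ a b hab
    have hab' : (a : ℕ) ≤ b := hab
    unfold extZero
    split_ifs with hb ha ha
    · exact h _ _ hab
    · omega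
    · exact h0.trans (h ⟨a, ha⟩ ⟨n - 2, h2⟩ (by simp only [Fin.le_def]; omega))
    · exact le_rfl

/-- For every `s ∈ 𝔖_n`, the set `{y : ⟨y, v_σ⟩ ≥ ⟨y, v_{s⁻¹}⟩ for all σ}` equals
`{y : ŷ_{s(1)} ≥ ŷ_{s(2)} ≥ ⋯ ≥ ŷ_{s(n)}}`; in particular, for `s` the identity,
`{y : ⟨y, v_σ⟩ ≥ 0 for all σ} = {y : y_1 ≥ y_2 ≥ ⋯ ≥ y_{n−1} ≥ 0}`. -/
theorem stmt10 (n : ℕ) (hn : 2 ≤ n) (s : Equiv.Perm (Fin n)) :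
    ({y : Fin (n - 1) → ℝ | ∀ σ : Equiv.Perm (Fin n),
        ∑ k, y k * vVec n s⁻¹ k ≤ ∑ k, y k * vVec n σ k} =
      {y : Fin (n - 1) → ℝ | ∀ a b : Fin n, a ≤ b →
        extZero n y (s b) ≤ extZero n y (s a)}) ∧
    ({y : Fin (n - 1) → ℝ | ∀ σ : Equiv.Perm (Fin n),
        0 ≤ ∑ k, y k * vVec n σ k} =
      {y : Fin (n - 1) → ℝ | (∀ a b : Fin (n - 1), a ≤ b → y b ≤ y a) ∧
        0 ≤ y ⟨n - 2, by omega⟩}) := by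
  have main (t : Equiv.Perm (Fin n)) (y : Fin (n - 1) → ℝ) :
      (∀ σ : Equiv.Perm (Fin n), ∑ k, y k * vVec n t⁻¹ k ≤ ∑ k, y k * vVec n σ k) ↔
        ∀ a b : Fin n, a ≤ b → extZero n y (t b) ≤ extZero n y (t a) := by
    simp only [sum_mul_vVec n hn, sub_le_sub_iff_right]
    exact forall_sum_mul_inv_le_iff _ _
  refine ⟨Set.ext fun y => main s y, Set.ext fun y => ?_⟩
  have h1 : ∑ k, y k * vVec n (1 : Equiv.Perm (Fin n))⁻¹ k = 0 := by simp [vVec]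
  have h := main 1 y
  rw [h1] at h
  exact h.trans (antitone_extZero_iff n _ y)
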